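/- Fix K ∈ ℕ, Δ > 0, ε₁ > 0, ε₂ > 0, and a real α > 1. Let the threshold noise density be p₁(z) = (ε₁/(2Δ)) exp(−ε₁|z|/Δ) (Laplace with scale Δ/ε₁) and the query noise density be p₂(y) = (ε₂/(2Δ)) exp(−ε₂|y|/Δ) (Laplace with scale Δ/ε₂), with CDF Φ₂(t) = ∫_{−∞}^t p₂(u) du. For a query vector a ∈ ℝ^K define P_k(a) = ∫_ℝ (∏_{i=1}^{k−1} Φ₂(z − a_i)) (1 − Φ₂(z − a_k)) p₁(z) dz. Then for any a, b ∈ ℝ^K with |a_i − b_i| ≤ Δ for all i, and for every k ∈ {1, …, K}: P_k(a)^α · P_k(b)^{1−α} ≤ [ (α/(2α−1)) e^{ε₁(α−1)} + ((α−1)/(2α−1)) e^{−ε₁α} ] · [ (α/(2α−1)) e^{2ε₂(α−1)} + ((α−1)/(2α−1)) e^{−2ε₂α} ]. Equivalently, (1/(α−1)) log( P_k(a)^α P_k(b)^{1−α} ) is at most the Rényi privacy budget ε(α, ε₁, ε₂) of Equation (4) of the paper. -/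

import Mathlib

open MeasureTheory Real

/-- Density of the centred Laplace distribution with rate `r`. -/
noncomputable def laplaceDensity (r z : ℝ) : ℝ := r / 2 * Real.exp (-(r * |z|))

/-- The integrand `q ^ α * p ^ (1 - α)` of the Rényi divergence of order `α` between the Laplace
density `p` of rate `r` and its translate `q` by `c`. -/
noncomputable def laplaceRenyiKernel (r c α z : ℝ) : ℝ :=
  r / 2 * Real.exp (-(r * (α * |z - c| + (1 - α) * |z|)))

/-- The integral of `laplaceRenyiKernel r c α`, as a function of `α` and `x = r * c`. -/
noncomputable def laplaceRenyiMoment (α x : ℝ) : ℝ :=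
  α / (2 * α - 1) * Real.exp (x * (α - 1)) + (α - 1) / (2 * α - 1) * Real.exp (-(x * α))

/-- Upper tail of the Laplace distribution with rate `r`. -/
noncomputable def laplaceTail (r t : ℝ) : ℝ := ∫ u in Set.Ioi t, laplaceDensity r u

theorem laplaceDensity_nonneg {r : ℝ} (hr : 0 < r) (z : ℝ) : 0 ≤ laplaceDensity r z := by
  unfold laplaceDensity; positivity

theorem laplaceRenyiMoment_nonneg {α : ℝ} (hα : 1 < α) (x : ℝ) :
    0 ≤ laplaceRenyiMoment α x := by
  have h₁ : 0 < α - 1 := by linarith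
  have h₂ : 0 < 2 * α - 1 := by linarith
  unfold laplaceRenyiMoment; positivity

theorem integral_laplaceRenyiKernel {r c α : ℝ} (hr : 0 < r) (hc : 0 ≤ c) (hα : 1 ≤ α) :
    Integrable (laplaceRenyiKernel r c α) ∧
      ∫ z, laplaceRenyiKernel r c α z = laplaceRenyiMoment α (r * c) := by
  have hα' : (0 : ℝ) < 2 * α - 1 := by linarith
  have hleft : Set.EqOn (laplaceRenyiKernel r c α)
      (fun z => r / 2 * Real.exp (-(r * c * α)) * Real.exp (r * z)) (Set.Iic 0) := by
    intro z hz
    have hz : z ≤ 0 := hz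
    simp only [laplaceRenyiKernel]
    rw [abs_of_nonpos hz, abs_of_nonpos (by linarith : z - c ≤ 0), mul_assoc, ← Real.exp_add]
    congr 2; ring
  have hmid : Set.EqOn (laplaceRenyiKernel r c α)
      (fun z => r / 2 * Real.exp (-(r * c * α)) * Real.exp ((r * (2 * α - 1)) * z))
      (Set.Ioc 0 c) := by
    intro z hz
    simp only [laplaceRenyiKernel]
    rw [abs_of_nonneg hz.1.le, abs_of_nonpos (by linarith [hz.2] : z - c ≤ 0), mul_assoc,
      ← Real.exp_add]
    congr 2; ring
  have hright : Set.EqOn (laplaceRenyiKernel r c α)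
      (fun z => r / 2 * Real.exp (r * c * α) * Real.exp ((-r) * z)) (Set.Ioi c) := by
    intro z hz
    have hz : c < z := hz
    simp only [laplaceRenyiKernel]
    rw [abs_of_nonneg (by linarith : 0 ≤ z), abs_of_nonneg (by linarith : 0 ≤ z - c), mul_assoc,
      ← Real.exp_add]
    congr 2; ring
  have ileft : IntegrableOn (laplaceRenyiKernel r c α) (Set.Iic 0) :=
    IntegrableOn.congr_fun ((integrableOn_exp_mul_Iic hr 0).const_mul _) hleft.symm
      measurableSet_Iic
  have imid : IntegrableOn (laplaceRenyiKernel r c α) (Set.Ioc 0 c) :=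
    IntegrableOn.congr_fun
      ((by fun_prop : Continuous fun z => r / 2 * Real.exp (-(r * c * α)) *
        Real.exp ((r * (2 * α - 1)) * z)).integrableOn_Ioc) hmid.symm measurableSet_Ioc
  have iright : IntegrableOn (laplaceRenyiKernel r c α) (Set.Ioi c) :=
    IntegrableOn.congr_fun ((integrableOn_exp_mul_Ioi (neg_lt_zero.2 hr) c).const_mul _)
      hright.symm measurableSet_Ioi
  have hpos : IntegrableOn (laplaceRenyiKernel r c α) (Set.Ioi 0) := by
    rw [← Set.Ioc_union_Ioi_eq_Ioi hc]; exact imid.union iright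
  refine ⟨?_, ?_⟩
  · rw [← integrableOn_univ, ← Set.Iic_union_Ioi (a := (0 : ℝ))]
    exact ileft.union hpos
  · have vmid : ∫ z in Set.Ioc 0 c, Real.exp ((r * (2 * α - 1)) * z) =
        (Real.exp ((r * (2 * α - 1)) * c) - 1) / (r * (2 * α - 1)) := by
      rw [← intervalIntegral.integral_of_le hc,
        intervalIntegral.integral_comp_mul_left (fun x => Real.exp x) (by positivity)]
      rw [integral_exp, mul_zero, Real.exp_zero, smul_eq_mul, inv_mul_eq_div]
    rw [← intervalIntegral.integral_Iic_add_Ioi ileft hpos, ← Set.Ioc_union_Ioi_eq_Ioi hc,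
      setIntegral_union (Set.Ioc_disjoint_Ioi le_rfl) measurableSet_Ioi imid iright,
      setIntegral_congr_fun measurableSet_Iic hleft, setIntegral_congr_fun measurableSet_Ioc hmid,
      setIntegral_congr_fun measurableSet_Ioi hright, integral_const_mul, integral_const_mul,
      integral_const_mul, integral_exp_mul_Iic hr, integral_exp_mul_Ioi (neg_lt_zero.2 hr), vmid]
    have e₁ : Real.exp ((r * (2 * α - 1)) * c) =
        Real.exp (r * c * (α - 1)) * Real.exp (r * c * α) := by
      rw [← Real.exp_add]; congr 1; ring
    have e₂ : Real.exp ((-r) * c) = Real.exp (r * c * (α - 1)) * Real.exp (-(r * c * α)) := by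
      rw [← Real.exp_add]; congr 1; ring
    rw [e₁, e₂, mul_zero, Real.exp_zero, Real.exp_neg, laplaceRenyiMoment, Real.exp_neg]
    have := (Real.exp_pos (r * c * α)).ne'
    field_simp
    ring

theorem integrable_laplaceDensity {r : ℝ} (hr : 0 < r) : Integrable (laplaceDensity r) := by
  refine (integral_laplaceRenyiKernel (c := 0) hr le_rfl le_rfl).1.congr (.of_forall fun z => ?_)
  simp [laplaceRenyiKernel, laplaceDensity]

theorem integral_laplaceDensity {r : ℝ} (hr : 0 < r) : ∫ z, laplaceDensity r z = 1 := by
  have h := (integral_laplaceRenyiKernel (c := 0) hr le_rfl le_rfl).2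
  norm_num [laplaceRenyiKernel, laplaceRenyiMoment] at h
  simpa [laplaceDensity] using h

/-- Hölder's inequality for integrals of weighted geometric means. -/
theorem integral_rpow_mul_rpow_le {X : Type*} [MeasurableSpace X] {μ : Measure X} {f g : X → ℝ}
    {s t : ℝ} (hs : 0 < s) (ht : 0 < t) (hst : s + t = 1) (hf : Integrable f μ)
    (hg : Integrable g μ) (hf0 : ∀ x, 0 ≤ f x) (hg0 : ∀ x, 0 ≤ g x) :
    ∫ x, f x ^ s * g x ^ t ∂μ ≤ (∫ x, f x ∂μ) ^ s * (∫ x, g x ∂μ) ^ t := by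
  have hp : ∀ x, 0 ≤ f x ^ s * g x ^ t := fun x =>
    mul_nonneg (Real.rpow_nonneg (hf0 x) _) (Real.rpow_nonneg (hg0 x) _)
  have hint : Integrable (fun x => f x ^ s * g x ^ t) μ := by
    refine ((hf.const_mul s).add (hg.const_mul t)).mono'
      ((hf.aemeasurable.pow_const s).mul (hg.aemeasurable.pow_const t)).aestronglyMeasurable
      (.of_forall fun x => ?_)
    rw [Real.norm_of_nonneg (hp x)]
    exact Real.geom_mean_le_arith_mean2_weighted hs.le ht.le (hf0 x) (hg0 x) hst
  have key := ENNReal.lintegral_mul_norm_pow_le (μ := μ) (f := fun x => ENNReal.ofReal (f x))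
    (g := fun x => ENNReal.ofReal (g x)) hf.aemeasurable.ennreal_ofReal
    hg.aemeasurable.ennreal_ofReal hs.le ht.le hst
  have hfi : 0 ≤ ∫ x, f x ∂μ := integral_nonneg hf0
  have hgi : 0 ≤ ∫ x, g x ∂μ := integral_nonneg hg0
  rw [← ofReal_integral_eq_lintegral_ofReal hf (.of_forall hf0),
    ← ofReal_integral_eq_lintegral_ofReal hg (.of_forall hg0),
    ENNReal.ofReal_rpow_of_nonneg hfi hs.le, ENNReal.ofReal_rpow_of_nonneg hgi ht.le,
    ← ENNReal.ofReal_mul (by positivity)] at key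
  rw [← ENNReal.ofReal_le_ofReal_iff (by positivity),
    ofReal_integral_eq_lintegral_ofReal hint (.of_forall hp)]
  refine le_trans (le_of_eq (lintegral_congr fun x => ?_)) key
  rw [ENNReal.ofReal_mul (Real.rpow_nonneg (hf0 x) _), ENNReal.ofReal_rpow_of_nonneg (hf0 x) hs.le,
    ENNReal.ofReal_rpow_of_nonneg (hg0 x) ht.le]

theorem integrable_mul_laplaceDensity {r : ℝ} (hr : 0 < r) {h : ℝ → ℝ} (hm : Measurable h)
    (h0 : ∀ z, 0 ≤ h z) (h1 : ∀ z, h z ≤ 1) (c : ℝ) :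
    Integrable fun z => h z * laplaceDensity r (z - c) :=
  ((integrable_laplaceDensity hr).comp_sub_right c).bdd_mul (c := 1) hm.aestronglyMeasurable
    (.of_forall fun z => by rw [Real.norm_of_nonneg (h0 z)]; exact h1 z)

/-- Replacing the translated Laplace density by the centred one inside an integral costs a factor
governed by the Rényi moment. -/
theorem integral_rpow_mul_laplaceDensity_sub_le {r c α : ℝ} (hr : 0 < r) (hc : 0 ≤ c)
    (hα : 1 < α) {h : ℝ → ℝ} (hm : Measurable h) (h0 : ∀ z, 0 ≤ h z) (h1 : ∀ z, h z ≤ 1) :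
    ∫ z, h z ^ (1 - 1 / α) * laplaceDensity r (z - c) ≤
      (∫ z, h z * laplaceDensity r z) ^ (1 - 1 / α) *
        laplaceRenyiMoment α (r * c) ^ (1 / α) := by
  have hα0 : 0 < α := by linarith
  have ht : 0 < 1 / α := by positivity
  have hs : 0 < 1 - 1 / α := by
    rw [sub_pos, div_lt_one hα0]; exact hα
  obtain ⟨hk, hk'⟩ := integral_laplaceRenyiKernel hr hc hα.le
  have hI : Integrable fun z => h z * laplaceDensity r z := by
    simpa using integrable_mul_laplaceDensity hr hm h0 h1 0
  have key := integral_rpow_mul_rpow_le hs ht (by ring) hI hk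
    (fun z => mul_nonneg (h0 z) (laplaceDensity_nonneg hr z))
    (fun z => by unfold laplaceRenyiKernel; positivity)
  rw [hk'] at key
  refine le_trans (le_of_eq (integral_congr_ae (.of_forall fun z => ?_))) key
  simp only
  rw [Real.mul_rpow (h0 z) (laplaceDensity_nonneg hr z), mul_assoc]
  congr 1
  have hr2 : 0 < r / 2 := by positivity
  unfold laplaceDensity laplaceRenyiKernel
  rw [Real.mul_rpow hr2.le (Real.exp_pos _).le, Real.mul_rpow hr2.le (Real.exp_pos _).le,
    ← Real.exp_mul, ← Real.exp_mul, mul_mul_mul_comm, ← Real.rpow_add hr2, ← Real.exp_add,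
    sub_add_cancel, Real.rpow_one]
  congr 2
  field_simp
  ring

theorem laplaceTail_nonneg {r : ℝ} (hr : 0 < r) (t : ℝ) : 0 ≤ laplaceTail r t :=
  integral_nonneg fun z => laplaceDensity_nonneg hr z

theorem laplaceTail_antitone {r : ℝ} (hr : 0 < r) : Antitone (laplaceTail r) := fun _ _ hst =>
  setIntegral_mono_set (integrable_laplaceDensity hr).integrableOn
    (.of_forall fun z => laplaceDensity_nonneg hr z) (Set.Ioi_subset_Ioi hst).eventuallyLE

theorem integral_Iic_laplaceDensity {r : ℝ} (hr : 0 < r) (t : ℝ) :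
    ∫ u in Set.Iic t, laplaceDensity r u = 1 - laplaceTail r t := by
  have hi := integrable_laplaceDensity hr
  rw [laplaceTail, ← integral_laplaceDensity hr,
    ← intervalIntegral.integral_Iic_add_Ioi (b := t) hi.integrableOn hi.integrableOn,
    add_sub_cancel_right]

theorem laplaceTail_le_one {r : ℝ} (hr : 0 < r) (t : ℝ) : laplaceTail r t ≤ 1 := by
  have h : 0 ≤ ∫ u in Set.Iic t, laplaceDensity r u :=
    integral_nonneg fun z => laplaceDensity_nonneg hr z
  linarith [integral_Iic_laplaceDensity hr t]

theorem laplaceTail_sub_le {r c α : ℝ} (hr : 0 < r) (hc : 0 ≤ c) (hα : 1 < α) (t : ℝ) :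
    laplaceTail r (t - c) ≤
      laplaceTail r t ^ (1 - 1 / α) * laplaceRenyiMoment α (r * c) ^ (1 / α) := by
  have hs : 1 - 1 / α ≠ 0 := by
    have : 1 / α < 1 := by rw [div_lt_one (by linarith)]; exact hα
    linarith
  have key := integral_rpow_mul_laplaceDensity_sub_le hr hc hα
    (h := (Set.Ioi t).indicator 1) (measurable_one.indicator measurableSet_Ioi)
    (fun z => Set.indicator_nonneg (by simp) z)
    (fun z => Set.indicator_le_self' (by simp) z)
  have e₁ : ∫ z, (Set.Ioi t).indicator (1 : ℝ → ℝ) z * laplaceDensity r z = laplaceTail r t := by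
    rw [laplaceTail, ← integral_indicator measurableSet_Ioi]
    refine integral_congr_ae (.of_forall fun z => ?_)
    by_cases hz : z ∈ Set.Ioi t <;> simp [Set.indicator, hz]
  have e₂ : ∫ z, (Set.Ioi t).indicator (1 : ℝ → ℝ) z ^ (1 - 1 / α) * laplaceDensity r (z - c) =
      laplaceTail r (t - c) := by
    rw [laplaceTail, ← integral_indicator measurableSet_Ioi,
      ← integral_sub_right_eq_self ((Set.Ioi (t - c)).indicator (laplaceDensity r)) c]
    refine integral_congr_ae (.of_forall fun z => ?_)
    by_cases hz : t < z
    · simp [Set.indicator, hz]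
    · rw [one_div] at hs
      simp [Set.indicator, hz, Real.zero_rpow hs]
  rwa [e₁, e₂] at key

theorem rpow_mul_rpow_le_of_le_rpow_mul {x y C α : ℝ} (hα : 1 < α) (hx : 0 ≤ x) (hy : 0 ≤ y)
    (hC : 0 ≤ C) (h : x ≤ y ^ (1 - 1 / α) * C ^ (1 / α)) : x ^ α * y ^ (1 - α) ≤ C := by
  have hα0 : 0 < α := by linarith
  rcases hy.eq_or_lt with rfl | hy
  · rw [Real.zero_rpow (by linarith), mul_zero]; exact hC
  · have h' : x ^ α ≤ y ^ (α - 1) * C := by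
      refine (Real.rpow_le_rpow hx h hα0.le).trans_eq ?_
      rw [Real.mul_rpow (by positivity) (by positivity), ← Real.rpow_mul hy.le,
        ← Real.rpow_mul hC, one_div_mul_cancel hα0.ne', Real.rpow_one, sub_mul,
        one_div_mul_cancel hα0.ne', one_mul]
    calc x ^ α * y ^ (1 - α) ≤ y ^ (α - 1) * C * y ^ (1 - α) := by gcongr
      _ = y ^ (α - 1) * y ^ (1 - α) * C := by ring
      _ = C := by rw [← Real.rpow_add hy]; simp

/-- Rényi bound for the probability that the noisy threshold exceeds the noisy queries indexed
by `s` but not the query `k`. -/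
theorem aboveThreshold_laplace_le {ι : Type*} (s : Finset ι) (k : ι) {Δ r₁ r₂ α : ℝ} (hΔ : 0 ≤ Δ)
    (hr₁ : 0 < r₁) (hr₂ : 0 < r₂) (hα : 1 < α) {P : (ι → ℝ) → ℝ}
    (hP : ∀ a, P a = ∫ z, (∏ i ∈ s, (1 - laplaceTail r₂ (z - a i))) *
      laplaceTail r₂ (z - a k) * laplaceDensity r₁ z)
    {a b : ι → ℝ} (hab : ∀ i, |a i - b i| ≤ Δ) :
    P a ^ α * P b ^ (1 - α) ≤
      laplaceRenyiMoment α (r₁ * Δ) * laplaceRenyiMoment α (r₂ * (2 * Δ)) := by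
  have hα0 : 0 < α := by linarith
  have ht : 0 < 1 / α := by positivity
  have hs : 0 < 1 - 1 / α := by
    rw [sub_pos, div_lt_one hα0]; exact hα
  have hT := laplaceTail_antitone hr₂
  have hT0 := laplaceTail_nonneg hr₂
  have hT1 := laplaceTail_le_one hr₂
  have hF0 : ∀ t, 0 ≤ 1 - laplaceTail r₂ t := fun t => sub_nonneg.2 (hT1 t)
  have hF1 : ∀ t, 1 - laplaceTail r₂ t ≤ 1 := fun t => sub_le_self _ (hT0 t)
  have hTm : Measurable (laplaceTail r₂) := hT.measurable
  let G : (ι → ℝ) → ℝ → ℝ := fun a z => ∏ i ∈ s, (1 - laplaceTail r₂ (z - a i))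
  have hG0 : ∀ a z, 0 ≤ G a z := fun a z => Finset.prod_nonneg fun i _ => hF0 _
  have hG1 : ∀ a z, G a z ≤ 1 := fun a z =>
    Finset.prod_le_one (fun i _ => hF0 _) (fun i _ => hF1 _)
  have hGm : ∀ a, Measurable (G a) := fun a => by
    refine Finset.measurable_fun_prod s fun i _ => ?_
    fun_prop
  let H : (ι → ℝ) → ℝ → ℝ := fun a z => G a z * laplaceTail r₂ (z - a k)
  have hH0 : ∀ a z, 0 ≤ H a z := fun a z => mul_nonneg (hG0 a z) (hT0 _)
  have hH1 : ∀ a z, H a z ≤ 1 := fun a z => mul_le_one₀ (hG1 a z) (hT0 _) (hT1 _)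
  have hHm : ∀ a, Measurable (H a) := fun a => by
    have := hGm a
    fun_prop
  have hP' : ∀ a, P a = ∫ z, H a z * laplaceDensity r₁ z := hP
  have hP0 : ∀ a, 0 ≤ P a := fun a => by
    rw [hP']
    exact integral_nonneg fun z => mul_nonneg (hH0 a z) (laplaceDensity_nonneg hr₁ z)
  have hM₁ := laplaceRenyiMoment_nonneg hα (r₁ * Δ)
  have hM₂ := laplaceRenyiMoment_nonneg hα (r₂ * (2 * Δ))
  have hshift : ∀ z, H a (z - Δ) ≤
      laplaceRenyiMoment α (r₂ * (2 * Δ)) ^ (1 / α) * H b z ^ (1 - 1 / α) := by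
    intro z
    have hG : G a (z - Δ) ≤ G b z := by
      refine Finset.prod_le_prod (fun i _ => hF0 _) fun i _ => sub_le_sub_left (hT ?_) _
      linarith [(abs_le.1 (hab i)).1]
    have hG' : G b z ≤ G b z ^ (1 - 1 / α) :=
      Real.self_le_rpow_of_le_one (hG0 b z) (hG1 b z) (by linarith)
    have hTk : laplaceTail r₂ (z - Δ - a k) ≤ laplaceTail r₂ (z - b k) ^ (1 - 1 / α) *
        laplaceRenyiMoment α (r₂ * (2 * Δ)) ^ (1 / α) :=
      (hT (by linarith [(abs_le.1 (hab k)).2])).trans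
        (laplaceTail_sub_le hr₂ (by positivity) hα (z - b k))
    calc H a (z - Δ) ≤ G b z ^ (1 - 1 / α) * (laplaceTail r₂ (z - b k) ^ (1 - 1 / α) *
          laplaceRenyiMoment α (r₂ * (2 * Δ)) ^ (1 / α)) :=
          mul_le_mul (hG.trans hG') hTk (hT0 _) (Real.rpow_nonneg (hG0 b z) _)
      _ = _ := by rw [Real.mul_rpow (hG0 b z) (hT0 _)]; ring
  refine rpow_mul_rpow_le_of_le_rpow_mul hα (hP0 a) (hP0 b) (mul_nonneg hM₁ hM₂) ?_
  calc P a = ∫ z, H a (z - Δ) * laplaceDensity r₁ (z - Δ) := by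
        rw [hP', integral_sub_right_eq_self (fun z => H a z * laplaceDensity r₁ z)]
    _ ≤ ∫ z, laplaceRenyiMoment α (r₂ * (2 * Δ)) ^ (1 / α) *
          (H b z ^ (1 - 1 / α) * laplaceDensity r₁ (z - Δ)) := by
        refine integral_mono
          (integrable_mul_laplaceDensity hr₁ ((hHm a).comp (measurable_sub_const Δ))
            (fun z => hH0 a _) (fun z => hH1 a _) Δ)
          ((integrable_mul_laplaceDensity hr₁ ((hHm b).pow_const _)
            (fun z => Real.rpow_nonneg (hH0 b z) _)
            (fun z => Real.rpow_le_one (hH0 b z) (hH1 b z) hs.le) Δ).const_mul _) fun z => ?_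
        simp only
        rw [← mul_assoc]
        exact mul_le_mul_of_nonneg_right (hshift z) (laplaceDensity_nonneg hr₁ _)
    _ ≤ laplaceRenyiMoment α (r₂ * (2 * Δ)) ^ (1 / α) *
          (P b ^ (1 - 1 / α) * laplaceRenyiMoment α (r₁ * Δ) ^ (1 / α)) := by
        rw [integral_const_mul, hP' b]
        exact mul_le_mul_of_nonneg_left
          (integral_rpow_mul_laplaceDensity_sub_le hr₁ hΔ hα (hHm b) (hH0 b) (hH1 b))
          (Real.rpow_nonneg hM₂ _)
    _ = _ := by rw [Real.mul_rpow hM₁ hM₂]; ring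

/-- RDP bound for the Laplace version of Noisy Backtracking
Line Search, Theorem 2 of the paper. With threshold-noise density `p₁` Laplace
of scale `Δ/ε₁` and query-noise density `p₂` Laplace of scale `Δ/ε₂`, for query
vectors `a, b` with `|a i − b i| ≤ Δ` coordinatewise and every output index `k`,
`P k a ^ α · P k b ^ (1−α)` is bounded by the product
`[α/(2α−1) e^{ε₁(α−1)} + (α−1)/(2α−1) e^{−ε₁α}] ·
 [α/(2α−1) e^{2ε₂(α−1)} + (α−1)/(2α−1) e^{−2ε₂α}]`
(i.e. `exp((α−1)·ε(α,ε₁,ε₂))` for the budget of Equation (4) of the paper). -/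
theorem noisyBTLS_laplace_RDP
    (K : ℕ) (Δ ε₁ ε₂ α : ℝ) (hΔ : 0 < Δ) (hε₁ : 0 < ε₁) (hε₂ : 0 < ε₂) (hα : 1 < α)
    (p₁ p₂ : ℝ → ℝ)
    (hp₁ : ∀ z : ℝ, p₁ z = ε₁ / (2 * Δ) * Real.exp (-(ε₁ * |z|) / Δ))
    (hp₂ : ∀ y : ℝ, p₂ y = ε₂ / (2 * Δ) * Real.exp (-(ε₂ * |y|) / Δ))
    (Φ₂ : ℝ → ℝ) (hΦ₂ : ∀ t : ℝ, Φ₂ t = ∫ u in Set.Iic t, p₂ u)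
    (P : Fin K → (Fin K → ℝ) → ℝ)
    (hP : ∀ (k : Fin K) (a : Fin K → ℝ),
      P k a = ∫ z : ℝ,
        (∏ i ∈ Finset.univ.filter (fun i : Fin K => i < k), Φ₂ (z - a i)) *
          (1 - Φ₂ (z - a k)) * p₁ z)
    (a b : Fin K → ℝ) (hab : ∀ i : Fin K, |a i - b i| ≤ Δ) :
    ∀ k : Fin K,
      P k a ^ α * P k b ^ (1 - α) ≤
        (α / (2 * α - 1) * Real.exp (ε₁ * (α - 1)) +
            (α - 1) / (2 * α - 1) * Real.exp (-(ε₁ * α))) *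
          (α / (2 * α - 1) * Real.exp (2 * ε₂ * (α - 1)) +
            (α - 1) / (2 * α - 1) * Real.exp (-(2 * ε₂ * α))) := by
  intro k
  have hr₁ : 0 < ε₁ / Δ := by positivity
  have hr₂ : 0 < ε₂ / Δ := by positivity
  have hd : ∀ ε z : ℝ, ε / (2 * Δ) * Real.exp (-(ε * |z|) / Δ) = laplaceDensity (ε / Δ) z := by
    intro ε z
    unfold laplaceDensity
    congr 1
    · field_simp
    · congr 1; ring
  have hΦ : ∀ t, Φ₂ t = 1 - laplaceTail (ε₂ / Δ) t := by
    intro t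
    simp only [hΦ₂, hp₂, hd]
    exact integral_Iic_laplaceDensity hr₂ t
  have key := aboveThreshold_laplace_le (Finset.univ.filter (fun i : Fin K => i < k)) k hΔ.le
    hr₁ hr₂ hα (P := P k) (fun a => by simp only [hP, hΦ, hp₁, hd, sub_sub_cancel]) hab
  have e₁ : ε₁ / Δ * Δ = ε₁ := by field_simp
  have e₂ : ε₂ / Δ * (2 * Δ) = 2 * ε₂ := by field_simp
  rw [e₁, e₂] at key
  exact key
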